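/- Let G = (V,E) be a finite connected undirected graph with at least one edge. Then the infimum of the objective Σ_{(i,j)∈E} d(i,j) over all LR-feasible functions d equals the infimum of the same objective over all LR_OL-feasible functions b. -/

import Mathlib

/-!
The two programs attain exactly the same set of objective values, so the infima agree.
An LR-feasible function is LR_OL-feasible by definition. Conversely, let `b` be
LR_OL-feasible and let `d = spClosure G b` be its shortest-path closure. Shortening a walk one
edge at a time uses only one-leg triangle inequalities, so `b i j` is at most the weight of every
walk from `i` to `j` (`OneLegFeasible.le_walkWeight`), whence `b ≤ d`. This preserves the
normalization. On an edge the one-step walk gives `d ≤ b`, so `d = b` there and the objective is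
unchanged (`OneLegFeasible.closure_eq_of_adj`). Finally `d` is a metric on the connected graph,
because walks can be reversed and concatenated.
-/

open SimpleGraph

/-- The `b`-weight of a walk: the sum of `b u v` over consecutive vertices `(u, v)`. -/
def walkWeight {V : Type*} {G : SimpleGraph V} (b : V → V → ℝ) {i j : V}
    (p : G.Walk i j) : ℝ :=
  (p.darts.map fun d => b d.toProd.1 d.toProd.2).sum

/-- `b` is one-leg feasible on `G`: nonnegative, symmetric, zero on the diagonal, and
satisfying the triangle inequality for all distinct `i j k` with `(i,k)` an edge. -/
def OneLegFeasible {V : Type*} (G : SimpleGraph V) (b : V → V → ℝ) : Prop :=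
  (∀ i j, 0 ≤ b i j) ∧ (∀ i j, b i j = b j i) ∧ (∀ i, b i i = 0) ∧
    ∀ i j k, i ≠ j → j ≠ k → i ≠ k → G.Adj i k → b i j ≤ b i k + b k j

open scoped Classical in
/-- The shortest-path closure of `b` on `G`: the infimum of the `b`-weights of walks
from `i` to `j`, with value `0` on the diagonal. -/
noncomputable def spClosure {V : Type*} (G : SimpleGraph V) (b : V → V → ℝ)
    (i j : V) : ℝ :=
  if i = j then 0 else sInf {x | ∃ p : G.Walk i j, walkWeight b p = x}

/-- `d` is feasible for the full metric linear program (LR) on `G`: nonnegative,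
symmetric, zero on the diagonal, the triangle inequality for all distinct triples,
and the normalization `∑ i, ∑ j, d i j ≥ 1`. -/
def LRFeasible {V : Type*} [Fintype V] (G : SimpleGraph V) (d : V → V → ℝ) : Prop :=
  (∀ i j, 0 ≤ d i j) ∧ (∀ i j, d i j = d j i) ∧ (∀ i, d i i = 0) ∧
    (∀ i j k, i ≠ j → j ≠ k → i ≠ k → d i j ≤ d i k + d k j) ∧
    1 ≤ ∑ i, ∑ j, d i j

/-- `b` is feasible for the one-leg linear program (LR_OL) on `G`: as `LRFeasible`,
but the triangle inequality is required only for distinct triples `i j k`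
with `(i,k)` an edge of `G`. -/
def LROLFeasible {V : Type*} [Fintype V] (G : SimpleGraph V) (b : V → V → ℝ) : Prop :=
  (∀ i j, 0 ≤ b i j) ∧ (∀ i j, b i j = b j i) ∧ (∀ i, b i i = 0) ∧
    (∀ i j k, i ≠ j → j ≠ k → i ≠ k → G.Adj i k → b i j ≤ b i k + b k j) ∧
    1 ≤ ∑ i, ∑ j, b i j

open scoped Classical in
/-- The objective `∑_{(i,j) ∈ E} x i j`, with each undirected edge counted once
(equivalently, half the sum over all ordered adjacent pairs for symmetric `x`). -/
noncomputable def edgeObjective {V : Type*} [Fintype V] (G : SimpleGraph V)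
    (x : V → V → ℝ) : ℝ :=
  (∑ i, ∑ j, if G.Adj i j then x i j else 0) / 2

theorem walkWeight_cons {V : Type*} {G : SimpleGraph V} (b : V → V → ℝ) {i j k : V}
    (h : G.Adj i j) (p : G.Walk j k) :
    walkWeight b (Walk.cons h p) = b i j + walkWeight b p := by
  simp [walkWeight]

theorem walkWeight_append {V : Type*} {G : SimpleGraph V} (b : V → V → ℝ) {i j k : V}
    (p : G.Walk i j) (q : G.Walk j k) :
    walkWeight b (p.append q) = walkWeight b p + walkWeight b q := by
  simp [walkWeight]

theorem walkWeight_reverse {V : Type*} {G : SimpleGraph V} {b : V → V → ℝ}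
    (hsymm : ∀ i j, b i j = b j i) {i j : V} (p : G.Walk i j) :
    walkWeight b p.reverse = walkWeight b p := by
  induction p with
  | nil => simp [walkWeight]
  | cons h p ih =>
    rw [Walk.reverse_cons, walkWeight_append, walkWeight_cons, walkWeight_cons, ih, hsymm]
    simp [walkWeight, add_comm]

/-- The one-leg triangle inequalities suffice to shorten a walk one edge at a time. -/
theorem OneLegFeasible.le_walkWeight {V : Type*} {G : SimpleGraph V} {b : V → V → ℝ}
    (hb : OneLegFeasible G b) {i j : V} (p : G.Walk i j) : b i j ≤ walkWeight b p := by
  obtain ⟨hnn, hsymm, hdiag, htri⟩ := hb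
  induction p with
  | nil => simp [walkWeight, hdiag]
  | @cons u v w h p ih =>
    rw [walkWeight_cons]
    have hstep : b u w ≤ b u v + b v w := by
      by_cases huw : u = w
      · subst huw
        rw [hdiag]
        exact add_nonneg (hnn _ _) (hnn _ _)
      by_cases hwv : w = v
      · subst hwv
        simp [hdiag]
      exact htri u w v huw hwv h.ne h
    linarith

theorem OneLegFeasible.spClosure_le {V : Type*} {G : SimpleGraph V} {b : V → V → ℝ}
    (hb : OneLegFeasible G b) {i j : V} (p : G.Walk i j) :
    spClosure G b i j ≤ walkWeight b p := by
  unfold spClosure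
  split_ifs with hij
  · exact (hb.1 i j).trans (hb.le_walkWeight p)
  · refine csInf_le ⟨b i j, ?_⟩ ⟨p, rfl⟩
    rintro _ ⟨q, rfl⟩
    exact hb.le_walkWeight q

theorem le_spClosure {V : Type*} {G : SimpleGraph V} (hconn : G.Connected) {b : V → V → ℝ}
    {i j : V} (hij : i ≠ j) {c : ℝ} (hc : ∀ p : G.Walk i j, c ≤ walkWeight b p) :
    c ≤ spClosure G b i j := by
  rw [spClosure, if_neg hij]
  obtain ⟨p⟩ := hconn.preconnected i j
  refine le_csInf ⟨_, p, rfl⟩ ?_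
  rintro _ ⟨q, rfl⟩
  exact hc q

theorem OneLegFeasible.le_closure {V : Type*} {G : SimpleGraph V} (hconn : G.Connected)
    {b : V → V → ℝ} (hb : OneLegFeasible G b) (i j : V) : b i j ≤ spClosure G b i j := by
  by_cases hij : i = j
  · subst hij
    simp [spClosure, hb.2.2.1]
  · exact le_spClosure hconn hij hb.le_walkWeight

theorem OneLegFeasible.closure_eq_of_adj {V : Type*} {G : SimpleGraph V} (hconn : G.Connected)
    {b : V → V → ℝ} (hb : OneLegFeasible G b) {i j : V} (h : G.Adj i j) :
    spClosure G b i j = b i j := by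
  refine le_antisymm ?_ (hb.le_closure hconn i j)
  simpa [walkWeight] using hb.spClosure_le (Walk.cons h Walk.nil)

theorem OneLegFeasible.closure_symm_le {V : Type*} {G : SimpleGraph V} (hconn : G.Connected)
    {b : V → V → ℝ} (hb : OneLegFeasible G b) {i j : V} (hij : i ≠ j) :
    spClosure G b i j ≤ spClosure G b j i :=
  le_spClosure hconn hij.symm fun p => by
    rw [← walkWeight_reverse hb.2.1 p]
    exact hb.spClosure_le _

theorem OneLegFeasible.closure_triangle {V : Type*} {G : SimpleGraph V} (hconn : G.Connected)
    {b : V → V → ℝ} (hb : OneLegFeasible G b) {i j k : V} (hik : i ≠ k) (hkj : k ≠ j) :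
    spClosure G b i j ≤ spClosure G b i k + spClosure G b k j := by
  rw [← sub_le_iff_le_add]
  refine le_spClosure hconn hik fun p => ?_
  rw [sub_le_iff_le_add, ← sub_le_iff_le_add']
  refine le_spClosure hconn hkj fun q => ?_
  rw [sub_le_iff_le_add', ← walkWeight_append]
  exact hb.spClosure_le _

theorem LROLFeasible.closure_feasible {V : Type*} [Fintype V] {G : SimpleGraph V}
    (hconn : G.Connected) {b : V → V → ℝ} (hb : LROLFeasible G b) :
    LRFeasible G (spClosure G b) := by
  obtain ⟨hnn, hsymm, hdiag, htri, hsum⟩ := hb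
  have hol : OneLegFeasible G b := ⟨hnn, hsymm, hdiag, htri⟩
  refine ⟨fun i j => (hnn i j).trans (hol.le_closure hconn i j), fun i j => ?_,
    fun i => by simp [spClosure], fun i j k _ hjk hik => hol.closure_triangle hconn hik hjk.symm,
    hsum.trans (Finset.sum_le_sum fun i _ => Finset.sum_le_sum fun j _ =>
      hol.le_closure hconn i j)⟩
  by_cases hij : i = j
  · rw [hij]
  · exact le_antisymm (hol.closure_symm_le hconn hij)
      (hol.closure_symm_le hconn (Ne.symm hij))

/-- **Equality of optimal values.** For a finite connected graph with at least one
edge, the infimum of the objective over (LR)-feasible functions equals the infimum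
over (LR_OL)-feasible functions. -/
theorem LR_value_eq_LROL_value {V : Type*} [Fintype V] (G : SimpleGraph V)
    (hconn : G.Connected) (hedge : G.edgeSet.Nonempty) :
    sInf {y : ℝ | ∃ x : V → V → ℝ, LRFeasible G x ∧ edgeObjective G x = y} =
      sInf {y : ℝ | ∃ x : V → V → ℝ, LROLFeasible G x ∧ edgeObjective G x = y} := by
  congr 1
  ext y
  constructor
  · rintro ⟨x, ⟨hnn, hsymm, hdiag, htri, hsum⟩, rfl⟩
    exact ⟨x, ⟨hnn, hsymm, hdiag, fun i j k hij hjk hik _ => htri i j k hij hjk hik, hsum⟩, rfl⟩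
  · rintro ⟨b, hb, rfl⟩
    have hol : OneLegFeasible G b := ⟨hb.1, hb.2.1, hb.2.2.1, hb.2.2.2.1⟩
    refine ⟨spClosure G b, hb.closure_feasible hconn, ?_⟩
    unfold edgeObjective
    congr 1
    refine Finset.sum_congr rfl fun i _ => Finset.sum_congr rfl fun j _ => ?_
    split_ifs with h
    · exact hol.closure_eq_of_adj hconn h
    · rfl
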